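/- Let G be a numeration system with coefficients a_0 ≥ a_1 ≥ … ≥ a_{d−1} ≥ 1, irreducible characteristic polynomial and Pisot characteristic root β. Then for every cylinder set Z, μ(Z) = λ(ψ_β(𝒦_Z)), where λ is one-dimensional Lebesgue measure and 𝒦_Z is the set of all regular digit sequences lying in Z; that is, the extended β-adic Monna map ψ_β transports the measure μ to Lebesgue measure on [0,1). -/

import Mathlib

open scoped BigOperators
open scoped Classical

/-- A numeration system `G = (G_n)` defined by a linear recurrence with
nonincreasing positive coefficients `a_0 ≥ a_1 ≥ … ≥ a_{d-1} ≥ 1`, together with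
the regular (greedy) digit expansion `dig n k = ε_k(n)` of every nonnegative integer. -/
structure NumerationSystem where
  d : ℕ
  hd : 1 ≤ d
  a : ℕ → ℕ
  ha_anti : ∀ i j, i ≤ j → j < d → a j ≤ a i
  ha_pos : ∀ i, i < d → 1 ≤ a i
  G : ℕ → ℕ
  hG0 : G 0 = 1
  hG_small : ∀ k, 0 < k → k < d → G k = (∑ i ∈ Finset.range k, a i * G (k - 1 - i)) + 1
  hG_rec : ∀ n : ℕ, G (n + d) = ∑ i ∈ Finset.range d, a i * G (n + d - 1 - i)
  dig : ℕ → ℕ → ℕ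
  hdig_fin : ∀ n : ℕ, ∃ K, (∀ k, K ≤ k → dig n k = 0) ∧ n = ∑ k ∈ Finset.range K, dig n k * G k
  hdig_reg : ∀ n K, ∑ k ∈ Finset.range K, dig n k * G k < G K

namespace NumerationSystem

/-- The characteristic polynomial `X^d - a_0 X^{d-1} - … - a_{d-1}` of the numeration system. -/
noncomputable def charPoly (S : NumerationSystem) : Polynomial ℤ :=
  Polynomial.X ^ S.d -
    ∑ i ∈ Finset.range S.d, Polynomial.C (S.a i : ℤ) * Polynomial.X ^ (S.d - 1 - i)

/-- `β` is the characteristic root of `S`: the characteristic polynomial is irreducible,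
`β` is a root, `β > 1`, and every other complex root has modulus `< 1` (so `β` is Pisot). -/
def IsCharRoot (S : NumerationSystem) (β : ℝ) : Prop :=
  Irreducible (S.charPoly.map (Int.castRingHom ℚ)) ∧
  (Polynomial.aeval β) S.charPoly = 0 ∧ 1 < β ∧
  ∀ z : ℂ, (Polynomial.aeval z) S.charPoly = 0 → z ≠ (β : ℂ) → ‖z‖ < 1

/-- `F_{K,r}` : the number of `n < G (K+r)` whose regular expansion starts with the word `w`. -/
noncomputable def F (S : NumerationSystem) (w : ℕ → ℕ) (K r : ℕ) : ℕ :=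
  ((Finset.range (S.G (K + r))).filter (fun n => ∀ i, i < K → S.dig n i = w i)).card

/-- The measure `μ` of the cylinder set given by the word `w` of length `K`. -/
noncomputable def mu (S : NumerationSystem) (β : ℝ) (w : ℕ → ℕ) (K : ℕ) : ℝ :=
  (∑ j ∈ Finset.range S.d,
      ((S.F w K j : ℝ) - ∑ i ∈ Finset.range j, (S.a i : ℝ) * (S.F w K (j - 1 - i) : ℝ))
        * β ^ (S.d - 1 - j)) /
    (β ^ K * ∑ i ∈ Finset.range S.d, β ^ i)

/-- The extended `β`-adic Monna map on digit sequences: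
`ψ_β(x) = ∑_{k ≥ 0} ∑_{i < x_k} μ(Z(x_0,…,x_{k-1},i))`. -/
noncomputable def psiSeq (S : NumerationSystem) (β : ℝ) (x : ℕ → ℕ) : ℝ :=
  ∑' k : ℕ, ∑ i ∈ Finset.range (x k), S.mu β (fun m => if m < k then x m else i) (k + 1)

/-- The extended `β`-adic Monna map on integers (via the regular `G`-expansion). -/
noncomputable def psi (S : NumerationSystem) (β : ℝ) (n : ℕ) : ℝ :=
  S.psiSeq β (S.dig n)

/-- A digit sequence is regular if all its partial sums satisfy the greedy condition. -/
def RegularSeq (S : NumerationSystem) (x : ℕ → ℕ) : Prop :=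
  ∀ K, ∑ k ∈ Finset.range K, x k * S.G k < S.G K

/-- A finite word of length `K` is a regular digit string. -/
def RegularWord (S : NumerationSystem) (w : ℕ → ℕ) (K : ℕ) : Prop :=
  ∀ K', K' ≤ K → ∑ k ∈ Finset.range K', w k * S.G k < S.G K'

/-- The Galois closure `K = ℚ(β_1,…,β_d)` of `ℚ(β)`, realized inside `ℂ` as the field
generated by all roots of the characteristic polynomial. -/
noncomputable def galoisClosure (S : NumerationSystem) : IntermediateField ℚ ℂ :=
  IntermediateField.adjoin ℚ {z : ℂ | (Polynomial.aeval z) S.charPoly = 0}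

/-- `k` is maximal with `a_0 = a_1 = … = a_k`. -/
def IsPlateau (S : NumerationSystem) (k : ℕ) : Prop :=
  k < S.d ∧ (∀ i, i ≤ k → S.a i = S.a 0) ∧ (k + 1 < S.d → S.a (k + 1) ≠ S.a 0)

/-- `βc 0, …, βc (d-1)` enumerate the (distinct) roots of the characteristic polynomial and
`b` gives the coefficients in the explicit formula `G_n = ∑_j b_j β_j^n`. -/
def IsRootData (S : NumerationSystem) (βc b : ℕ → ℂ) : Prop :=
  (∀ j, j < S.d → (Polynomial.aeval (βc j)) S.charPoly = 0) ∧
  (∀ j j', j < S.d → j' < S.d → βc j = βc j' → j = j') ∧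
  ∀ n : ℕ, (S.G n : ℂ) = ∑ j ∈ Finset.range S.d, b j * βc j ^ n

end NumerationSystem

/-- The maximal digit pattern: `ε_i = a_0` if `(k+1) ∤ i` or `i = 0`, and `ε_i = a_0 - 1`
otherwise. -/
def maxPattern (a0 k i : ℕ) : ℕ :=
  if (k + 1) ∣ i ∧ i ≠ 0 then a0 - 1 else a0

/-- The constant `A = 1 + ∑_j a_0 b_j/(1-β_j) - ∑_j b_j/(1-β_j^{k+1})` from the corner
analysis (for a corner coordinate equal to 1). -/
noncomputable def cornerA (S : NumerationSystem) (βc b : ℕ → ℂ) (k : ℕ) : ℂ :=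
  1 + ∑ j ∈ Finset.range S.d, (S.a 0 : ℂ) * b j / (1 - βc j)
    - ∑ j ∈ Finset.range S.d, b j / (1 - βc j ^ (k + 1))

/-- The coefficient `c_j^{(i)} = ∑_{m ≥ 0} b_j ε_{n_0+m}(N) β_j^m` (corner coordinate 0). -/
noncomputable def cornerC0 (S : NumerationSystem) (βc b : ℕ → ℂ) (N n0 j : ℕ) : ℂ :=
  ∑' m : ℕ, (S.dig N (n0 + m) : ℂ) * b j * βc j ^ m

/-- The coefficient `c_j^{(i)}` for a corner coordinate equal to 1. -/
noncomputable def cornerC1 (S : NumerationSystem) (βc b : ℕ → ℂ) (k N n1 j : ℕ) : ℂ :=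
  cornerC0 S βc b N n1 j - (S.a 0 : ℂ) * b j / (1 - βc j)
    + b j * βc j ^ ((n1 + k) / (k + 1) * (k + 1) - n1) / (1 - βc j ^ (k + 1))

/-- Lexicographic comparison of words of length `n`, reading the highest digit first:
`w <_lex w'` iff they differ at some position `m` with `w m < w' m` and agree above `m`. -/
def LexLtBelow (n : ℕ) (w w' : ℕ → ℕ) : Prop :=
  ∃ m, m < n ∧ w m < w' m ∧ ∀ j, m < j → j < n → w j = w' j

/-- The exponent `H` of the corner avoidance theorem. -/
noncomputable def cornerH {s : ℕ} (h : Fin s → ℕ) : ℕ :=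
  if ∀ i, h i = 0 then 2 else if ∀ i, h i = 1 then s else 1 + ∑ i, h i

/-- A sequence `(x_n)_{n>0}` in `[0,1)^s` is uniformly distributed modulo 1. -/
def IsUniformlyDistributed {s : ℕ} (x : ℕ → Fin s → ℝ) : Prop :=
  ∀ a b : Fin s → ℝ, (∀ i, 0 ≤ a i) → (∀ i, a i ≤ b i) → (∀ i, b i ≤ 1) →
    Filter.Tendsto
      (fun N : ℕ =>
        (((Finset.Icc 1 N).filter fun n => ∀ i, a i ≤ x n i ∧ x n i < b i).card : ℝ) / (N : ℝ))
      Filter.atTop (nhds (∏ i, (b i - a i)))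

namespace NumerationSystem

theorem partial_le (S : NumerationSystem) (q M : ℕ) (hq : q ≤ S.d) (hM : q ≤ M) :
    ∑ s ∈ Finset.range q, S.a s * S.G (M - 1 - s) ≤ S.G M := by
  by_cases h : S.d ≤ M
  · obtain ⟨n, rfl⟩ := Nat.exists_eq_add_of_le' h
    rw [S.hG_rec n]
    exact Finset.sum_le_sum_of_subset (by simpa using hq)
  · rcases Nat.eq_zero_or_pos M with h0 | h0
    · have : q = 0 := by omega
      subst this; simp
    · rw [S.hG_small M h0 (by omega)]
      refine le_trans (Finset.sum_le_sum_of_subset (t := Finset.range M) (by simpa using hM)) ?_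
      omega

theorem G_step (S : NumerationSystem) (n : ℕ) : S.G n ≤ S.G (n + 1) := by
  have := S.partial_le 1 (n+1) S.hd (by omega)
  simp at this
  have h1 := S.ha_pos 0 S.hd
  nlinarith

theorem G_mono (S : NumerationSystem) : Monotone S.G := monotone_nat_of_le_succ S.G_step

theorem G_pos (S : NumerationSystem) (n : ℕ) : 1 ≤ S.G n := by
  have := S.G_mono (Nat.zero_le n)
  rwa [S.hG0] at this

/-- growth bound -/
def B (S : NumerationSystem) : ℕ := ∑ i ∈ Finset.range S.d, S.a i + 1

theorem G_growth (S : NumerationSystem) (k : ℕ) : S.G (k + 1) ≤ S.B * S.G k := by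
  have h1 : S.G (k+1) ≤ ∑ i ∈ Finset.range S.d, S.a i * S.G (k + 1 - 1 - i) + 1 := by
    by_cases h : S.d ≤ k + 1
    · obtain ⟨n, hn⟩ := Nat.exists_eq_add_of_le' h
      rw [hn, S.hG_rec n]; omega
    · rw [S.hG_small (k+1) (by omega) (by omega)]
      gcongr
      omega
  have h2 : ∑ i ∈ Finset.range S.d, S.a i * S.G (k + 1 - 1 - i) ≤
      ∑ i ∈ Finset.range S.d, S.a i * S.G k := by
    gcongr with i hi
    exact S.G_mono (by omega)
  rw [← Finset.sum_mul] at h2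
  have := S.G_pos k
  unfold B
  nlinarith

theorem dig_lt (S : NumerationSystem) (n k : ℕ) : S.dig n k * S.G k < S.G (k + 1) := by
  have := S.hdig_reg n (k+1)
  rw [Finset.sum_range_succ] at this
  omega

theorem dig_lt_G (S : NumerationSystem) (n k : ℕ) : S.dig n k < S.G (k + 1) := by
  have := S.dig_lt n k
  have := S.G_pos k
  nlinarith

theorem dig_lt_B (S : NumerationSystem) (n k : ℕ) : S.dig n k < S.B := by
  have := (S.dig_lt n k).trans_le (S.G_growth k)
  exact lt_of_mul_lt_mul_right this (Nat.zero_le _)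

theorem val_dig (S : NumerationSystem) (n L : ℕ) (h : n < S.G L) :
    ∑ k ∈ Finset.range L, S.dig n k * S.G k = n := by
  obtain ⟨K, h0, hK⟩ := S.hdig_fin n
  have hz : ∀ k, L ≤ k → S.dig n k = 0 := by
    intro k hk
    by_contra hne
    have hkK : k < K := by
      by_contra hh
      exact hne (h0 k (by omega))
    have h1 : S.dig n k * S.G k ≤ ∑ k ∈ Finset.range K, S.dig n k * S.G k :=
      Finset.single_le_sum (f := fun k => S.dig n k * S.G k) (fun _ _ => Nat.zero_le _)
        (Finset.mem_range.2 hkK)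
    rw [← hK] at h1
    have h2 := S.G_mono hk
    have h3 : 1 ≤ S.dig n k := by omega
    nlinarith
  have e1 : ∑ k ∈ Finset.range L, S.dig n k * S.G k
      = ∑ k ∈ Finset.range (max L K), S.dig n k * S.G k := by
    apply Finset.sum_subset (by simp)
    intro x _ hx
    rw [hz x (by simpa using hx), zero_mul]
  have e2 : ∑ k ∈ Finset.range K, S.dig n k * S.G k
      = ∑ k ∈ Finset.range (max L K), S.dig n k * S.G k := by
    apply Finset.sum_subset (by simp)
    intro x _ hx
    rw [h0 x (by simpa using hx), zero_mul]
  omega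

theorem div_unique {g a b r s : ℕ} (hr : r < g) (hs : s < g) (h : r + a * g = s + b * g) :
    a = b ∧ r = s := by
  have hg : 0 < g := by omega
  have h1 : (r + a * g) % g = r := by simp [Nat.add_mul_mod_self_right, Nat.mod_eq_of_lt hr]
  have h2 : (s + b * g) % g = s := by simp [Nat.add_mul_mod_self_right, Nat.mod_eq_of_lt hs]
  have e : r = s := by rw [← h1, h, h2]
  subst e
  exact ⟨Nat.eq_of_mul_eq_mul_right hg (by omega), rfl⟩

theorem word_unique (S : NumerationSystem) (x y : ℕ → ℕ) (K : ℕ) (hx : S.RegularWord x K)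
    (hy : S.RegularWord y K)
    (h : ∑ k ∈ Finset.range K, x k * S.G k = ∑ k ∈ Finset.range K, y k * S.G k) :
    ∀ k, k < K → x k = y k := by
  induction K with
  | zero => intro k hk; omega
  | succ K ih =>
    rw [Finset.sum_range_succ, Finset.sum_range_succ] at h
    obtain ⟨h1, h2⟩ := div_unique (hx K (by omega)) (hy K (by omega)) h
    intro k hk
    rcases Nat.lt_succ_iff_lt_or_eq.1 hk with h' | rfl
    · exact ih (fun K' hK' => hx K' (by omega)) (fun K' hK' => hy K' (by omega)) h2 k h'
    · exact h1

theorem dig_add (S : NumerationSystem) (L c m : ℕ) (hm : m < S.G L)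
    (h : c * S.G L + m < S.G (L + 1)) (j : ℕ) (hj : j < L) :
    S.dig (c * S.G L + m) j = S.dig m j := by
  apply S.word_unique _ _ L (fun K' _ => S.hdig_reg _ K') (fun K' _ => S.hdig_reg _ K') _ j hj
  rw [S.val_dig m L hm]
  have := S.val_dig _ _ h
  rw [Finset.sum_range_succ] at this
  refine (div_unique (a := S.dig (c * S.G L + m) L) (b := c) (S.hdig_reg _ L) hm ?_).2
  omega

/-- counting function -/
noncomputable def Cn (S : NumerationSystem) (w : ℕ → ℕ) (K m : ℕ) : ℕ :=
  ((Finset.range m).filter (fun n => ∀ i, i < K → S.dig n i = w i)).card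

theorem F_eq (S : NumerationSystem) (w : ℕ → ℕ) (K r : ℕ) : S.F w K r = S.Cn w K (S.G (K + r)) :=
  rfl

theorem Cn_mono (S : NumerationSystem) (w : ℕ → ℕ) (K : ℕ) : Monotone (S.Cn w K) := by
  intro m n h
  unfold Cn
  apply Finset.card_le_card
  apply Finset.filter_subset_filter
  simpa using h

theorem Cn_shift (S : NumerationSystem) (w : ℕ → ℕ) (K s m : ℕ)
    (h : ∀ n, n < m → ∀ i, i < K → S.dig (s + n) i = S.dig n i) :
    S.Cn w K (s + m) = S.Cn w K s + S.Cn w K m := by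
  unfold Cn
  rw [← Nat.count_eq_card_filter_range, ← Nat.count_eq_card_filter_range,
    ← Nat.count_eq_card_filter_range, Nat.count_add]
  congr 1
  rw [Nat.count_eq_card_filter_range, Nat.count_eq_card_filter_range]
  congr 1
  apply Finset.filter_congr
  intro n hn
  rw [Finset.mem_range] at hn
  constructor
  · intro H i hi; rw [← h n hn i hi]; exact H i hi
  · intro H i hi; rw [h n hn i hi]; exact H i hi

theorem Cn_block (S : NumerationSystem) (w : ℕ → ℕ) (K L c m : ℕ) (hKL : K ≤ L)
    (hm : m ≤ S.G L) (h : c * S.G L + m ≤ S.G (L + 1)) :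
    S.Cn w K (c * S.G L + m) = c * S.Cn w K (S.G L) + S.Cn w K m := by
  have key : ∀ c, c * S.G L + m ≤ S.G (L + 1) → S.Cn w K (c * S.G L) = c * S.Cn w K (S.G L) := by
    intro c
    induction c with
    | zero => intro _; simp [Cn]
    | succ c ih =>
      intro h
      have h' : c * S.G L + S.G L + m ≤ S.G (L+1) := by rw [add_mul] at h; simpa using h
      rw [add_mul, add_mul, one_mul, one_mul, Cn_shift, ih (by omega)]
      intro n hn i hi
      exact S.dig_add L c n hn (by omega) i (by omega)
  rw [Cn_shift, key c h]
  intro n hn i hi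
  exact S.dig_add L c n (by omega) (by omega) i (by omega)

/-- tail sums -/
def T (S : NumerationSystem) (K t q : ℕ) : ℕ :=
  ∑ s ∈ Finset.range q, S.a (t + s) * S.G (K + q - 1 - s)

theorem T_le (S : NumerationSystem) (K t q : ℕ) (h : t + q ≤ S.d) : S.T K t q ≤ S.G (K + q) := by
  refine le_trans ?_ (S.partial_le q (K + q) (by omega) (by omega))
  unfold T
  apply Finset.sum_le_sum
  intro s hs
  rw [Finset.mem_range] at hs
  exact Nat.mul_le_mul_right _ (S.ha_anti _ _ (by omega) (by omega))

theorem T_succ (S : NumerationSystem) (K t q : ℕ) :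
    S.T K t (q + 1) = S.a t * S.G (K + q) + S.T K (t + 1) q := by
  unfold T
  rw [Finset.sum_range_succ', add_comm]
  congr 1
  apply Finset.sum_congr rfl
  intro s _
  rw [show t + (s + 1) = t + 1 + s by ring, show K + (q + 1) - 1 - (s + 1) = K + q - 1 - s by omega]

theorem Cn_T (S : NumerationSystem) (w : ℕ → ℕ) (K t q : ℕ) (h : t + q ≤ S.d) :
    S.Cn w K (S.T K t q) = ∑ s ∈ Finset.range q, S.a (t + s) * S.F w K (q - 1 - s) := by
  induction q generalizing t with
  | zero => simp [T, Cn]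
  | succ q ih =>
    have h1 := S.T_le K t (q+1) h
    rw [T_succ] at h1 ⊢
    rw [S.Cn_block w K (K + q) _ _ (by omega) (S.T_le K (t+1) q (by omega)) h1, ih _ (by omega),
      Finset.sum_range_succ', add_comm]
    congr 1
    apply Finset.sum_congr rfl
    intro s _
    rw [show t + (s + 1) = t + 1 + s by ring, show (q + 1) - 1 - (s + 1) = q - 1 - s by omega]

theorem F_ge (S : NumerationSystem) (w : ℕ → ℕ) (K j : ℕ) (h : j ≤ S.d) :
    ∑ s ∈ Finset.range j, S.a s * S.F w K (j - 1 - s) ≤ S.F w K j := by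
  have h1 := S.Cn_T w K 0 j (by omega)
  simp only [zero_add] at h1
  rw [← h1, F_eq]
  exact S.Cn_mono w K (S.T_le K 0 j (by omega))

theorem F_rec (S : NumerationSystem) (w : ℕ → ℕ) (K : ℕ) :
    S.F w K S.d = ∑ s ∈ Finset.range S.d, S.a s * S.F w K (S.d - 1 - s) := by
  have h1 := S.Cn_T w K 0 S.d (by omega)
  simp only [zero_add] at h1
  rw [← h1, F_eq, S.hG_rec]
  simp [T]

/-- extension of a word by a digit -/
def ext (w : ℕ → ℕ) (k i : ℕ) : ℕ → ℕ := fun m => if m < k then w m else i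

theorem F_congr (S : NumerationSystem) (w v : ℕ → ℕ) (K r : ℕ) (h : ∀ i, i < K → w i = v i) :
    S.F w K r = S.F v K r := by
  unfold F
  congr 1
  apply Finset.filter_congr
  intro n _
  constructor
  · intro H i hi; rw [← h i hi]; exact H i hi
  · intro H i hi; rw [h i hi]; exact H i hi

theorem F_add (S : NumerationSystem) (w : ℕ → ℕ) (K r M : ℕ) (hM : ∀ n, S.dig n K < M) :
    S.F w K (r + 1) = ∑ i ∈ Finset.range M, S.F (ext w K i) (K + 1) r := by
  unfold F
  rw [Finset.card_eq_sum_card_fiberwise (f := fun n => S.dig n K) (t := Finset.range M)]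
  · apply Finset.sum_congr rfl
    intro i _
    rw [Finset.filter_filter, show K + (r + 1) = K + 1 + r by ring]
    congr 1
    apply Finset.filter_congr
    intro n _
    constructor
    · rintro ⟨h1, h2⟩ m hm
      unfold ext
      split_ifs with h
      · exact h1 m h
      · have : m = K := by omega
        rw [this]; exact h2
    · intro H
      constructor
      · intro m hm
        have := H m (by omega)
        simpa [ext, hm] using this
      · simpa [ext] using H K (by omega)
  · intro n _
    simpa using hM n

theorem F_zero_le (S : NumerationSystem) (w : ℕ → ℕ) (K : ℕ) : S.F w K 0 ≤ 1 := by
  unfold F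
  rw [Finset.card_le_one]
  intro m hm n hn
  simp only [Finset.mem_filter, Finset.mem_range, add_zero] at hm hn
  rw [← S.val_dig m K hm.1, ← S.val_dig n K hn.1]
  apply Finset.sum_congr rfl
  intro k hk
  rw [Finset.mem_range] at hk
  rw [hm.2 k hk, hn.2 k hk]

theorem F_le (S : NumerationSystem) (w : ℕ → ℕ) (K r : ℕ) : S.F w K r ≤ S.B ^ r := by
  induction r generalizing w K with
  | zero => simpa using S.F_zero_le w K
  | succ r ih =>
    rw [S.F_add w K r S.B (fun n => S.dig_lt_B n K)]
    refine le_trans (Finset.sum_le_sum (fun i _ => ih _ _)) ?_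
    simp [pow_succ, mul_comm]

theorem beta_eq (S : NumerationSystem) (β : ℝ) (hβ : S.IsCharRoot β) :
    β ^ S.d = ∑ i ∈ Finset.range S.d, (S.a i : ℝ) * β ^ (S.d - 1 - i) := by
  have := hβ.2.1
  unfold charPoly at this
  simp at this
  linarith

theorem num_shift (d : ℕ) (a f : ℕ → ℝ) (β : ℝ)
    (hβ : β ^ d = ∑ i ∈ Finset.range d, a i * β ^ (d - 1 - i))
    (hf : f d = ∑ i ∈ Finset.range d, a i * f (d - 1 - i)) :
    ∑ j ∈ Finset.range d, (f (j + 1) - ∑ i ∈ Finset.range j, a i * f (j - 1 - i + 1))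
      * β ^ (d - 1 - j) =
    β * ∑ j ∈ Finset.range d, (f j - ∑ i ∈ Finset.range j, a i * f (j - 1 - i))
      * β ^ (d - 1 - j) := by
  set g : ℕ → ℝ := fun j => (f j - ∑ i ∈ Finset.range j, a i * f (j - 1 - i)) * β ^ (d - j) with hg
  have e1 : β * ∑ j ∈ Finset.range d, (f j - ∑ i ∈ Finset.range j, a i * f (j - 1 - i))
      * β ^ (d - 1 - j) = ∑ j ∈ Finset.range d, g j := by
    rw [Finset.mul_sum]
    apply Finset.sum_congr rfl
    intro j hj
    rw [Finset.mem_range] at hj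
    simp only [hg]
    rw [show d - j = d - 1 - j + 1 by omega, pow_succ]
    ring
  have e2 : ∑ j ∈ Finset.range d, (f (j + 1) - ∑ i ∈ Finset.range j, a i * f (j - 1 - i + 1))
      * β ^ (d - 1 - j) = ∑ j ∈ Finset.range d, (g (j + 1) + f 0 * (a j * β ^ (d - 1 - j))) := by
    apply Finset.sum_congr rfl
    intro j hj
    simp only [hg]
    rw [Finset.sum_range_succ, show d - (j + 1) = d - 1 - j by omega,
      show j + 1 - 1 - j = 0 by omega]
    have : ∑ i ∈ Finset.range j, a i * f (j - 1 - i + 1)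
        = ∑ i ∈ Finset.range j, a i * f (j + 1 - 1 - i) := by
      apply Finset.sum_congr rfl
      intro i hi
      rw [Finset.mem_range] at hi
      rw [show j - 1 - i + 1 = j + 1 - 1 - i by omega]
    rw [this]
    ring
  have gd : g d = 0 := by simp [hg, ← hf]
  have g0 : g 0 = f 0 * β ^ d := by simp [hg]
  have h1 := Finset.sum_range_succ g d
  have h2 := Finset.sum_range_succ' g d
  rw [e1, e2, Finset.sum_add_distrib, ← Finset.mul_sum, ← hβ]
  linarith

theorem mu_congr (S : NumerationSystem) (β : ℝ) (w v : ℕ → ℕ) (K : ℕ)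
    (h : ∀ i, i < K → w i = v i) : S.mu β w K = S.mu β v K := by
  unfold mu
  simp only [fun r => S.F_congr w v K r h]

theorem den_pos (S : NumerationSystem) (β : ℝ) (hβ : S.IsCharRoot β) :
    0 < ∑ i ∈ Finset.range S.d, β ^ i := by
  have h1 := hβ.2.2.1
  apply Finset.sum_pos
  · intro i _; positivity
  · have := S.hd
    simp; omega

theorem mu_add (S : NumerationSystem) (β : ℝ) (hβ : S.IsCharRoot β) (w : ℕ → ℕ) (K M : ℕ)
    (hM : ∀ n, S.dig n K < M) :
    S.mu β w K = ∑ i ∈ Finset.range M, S.mu β (ext w K i) (K + 1) := by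
  have h1 := hβ.2.2.1
  have hD := S.den_pos β hβ
  have hs := num_shift S.d (fun i => (S.a i : ℝ)) (fun r => (S.F w K r : ℝ)) β (S.beta_eq β hβ)
    (by simp only [S.F_rec w K]; push_cast; rfl)
  simp only [S.F_add w K _ M hM] at hs
  unfold mu
  rw [← Finset.sum_div, Finset.sum_comm]
  have e : ∑ j ∈ Finset.range S.d, ∑ x ∈ Finset.range M,
      ((S.F (ext w K x) (K + 1) j : ℝ) - ∑ i ∈ Finset.range j,
        (S.a i : ℝ) * (S.F (ext w K x) (K + 1) (j - 1 - i) : ℝ)) * β ^ (S.d - 1 - j)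
      = β * ∑ j ∈ Finset.range S.d, ((S.F w K j : ℝ) - ∑ i ∈ Finset.range j,
        (S.a i : ℝ) * (S.F w K (j - 1 - i) : ℝ)) * β ^ (S.d - 1 - j) := by
    rw [← hs]
    apply Finset.sum_congr rfl
    intro j _
    rw [← Finset.sum_mul, Finset.sum_sub_distrib]
    push_cast
    congr 2
    rw [Finset.sum_comm]
    simp only [Finset.mul_sum]
  rw [e, pow_succ]
  have : β ≠ 0 := by positivity
  field_simp

theorem mu_nonneg (S : NumerationSystem) (β : ℝ) (hβ : S.IsCharRoot β) (w : ℕ → ℕ) (K : ℕ) :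
    0 ≤ S.mu β w K := by
  have h1 := hβ.2.2.1
  have hD := S.den_pos β hβ
  unfold mu
  apply div_nonneg
  · apply Finset.sum_nonneg
    intro j hj
    rw [Finset.mem_range] at hj
    have := S.F_ge w K j hj.le
    have h2 : ∑ i ∈ Finset.range j, (S.a i : ℝ) * (S.F w K (j - 1 - i) : ℝ) ≤ S.F w K j := by
      exact_mod_cast this
    exact mul_nonneg (by linarith) (by positivity)
  · positivity

theorem mu_le (S : NumerationSystem) (β : ℝ) (hβ : S.IsCharRoot β) (w : ℕ → ℕ) (K : ℕ) :
    S.mu β w K ≤ ((∑ j ∈ Finset.range S.d, (S.B : ℝ) ^ j * β ^ (S.d - 1 - j)) /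
      ∑ i ∈ Finset.range S.d, β ^ i) * (β⁻¹) ^ K := by
  have h1 := hβ.2.2.1
  have hD := S.den_pos β hβ
  have : S.mu β w K ≤ (∑ j ∈ Finset.range S.d, (S.B : ℝ) ^ j * β ^ (S.d - 1 - j)) /
      (β ^ K * ∑ i ∈ Finset.range S.d, β ^ i) := by
    unfold mu
    gcongr with j hj
    have h2 : (S.F w K j : ℝ) ≤ (S.B : ℝ) ^ j := by exact_mod_cast S.F_le w K j
    have h3 : 0 ≤ ∑ i ∈ Finset.range j, (S.a i : ℝ) * (S.F w K (j - 1 - i) : ℝ) := by positivity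
    linarith
  refine this.trans (le_of_eq ?_)
  rw [inv_pow]
  field_simp

theorem mu_tendsto (S : NumerationSystem) (β : ℝ) (hβ : S.IsCharRoot β) (w : ℕ → ℕ) :
    Filter.Tendsto (fun K => S.mu β w K) Filter.atTop (nhds 0) := by
  have h1 := hβ.2.2.1
  have h2 : Filter.Tendsto (fun K : ℕ => (β⁻¹) ^ K) Filter.atTop (nhds 0) :=
    tendsto_pow_atTop_nhds_zero_of_lt_one (by positivity) (inv_lt_one_of_one_lt₀ h1)
  have h3 := h2.const_mul ((∑ j ∈ Finset.range S.d, (S.B : ℝ) ^ j * β ^ (S.d - 1 - j)) /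
      ∑ i ∈ Finset.range S.d, β ^ i)
  rw [mul_zero] at h3
  exact squeeze_zero (fun K => S.mu_nonneg β hβ w K) (fun K => S.mu_le β hβ w K) h3

theorem regular_of_mu_pos (S : NumerationSystem) (β : ℝ) (w : ℕ → ℕ) (K : ℕ)
    (h : 0 < S.mu β w K) : S.RegularWord w K := by
  by_contra hr
  have hF : ∀ r, S.F w K r = 0 := by
    intro r
    unfold F
    rw [Finset.card_eq_zero, Finset.filter_eq_empty_iff]
    intro n _ H
    apply hr
    intro K' hK'
    have := S.hdig_reg n K'
    have e : ∑ k ∈ Finset.range K', S.dig n k * S.G k = ∑ k ∈ Finset.range K', w k * S.G k := by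
      apply Finset.sum_congr rfl
      intro k hk
      rw [Finset.mem_range] at hk
      rw [H k (by omega)]
    rwa [e] at this
  unfold mu at h
  simp [hF] at h

/-- partial sums of the Monna map -/
noncomputable def P (S : NumerationSystem) (β : ℝ) (x : ℕ → ℕ) (k : ℕ) : ℝ :=
  ∑ j ∈ Finset.range k, ∑ i ∈ Finset.range (x j), S.mu β (ext x j i) (j + 1)

theorem P_congr (S : NumerationSystem) (β : ℝ) (w v : ℕ → ℕ) (K : ℕ)
    (h : ∀ i, i < K → w i = v i) : S.P β w K = S.P β v K := by
  unfold P
  apply Finset.sum_congr rfl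
  intro j hj
  rw [Finset.mem_range] at hj
  rw [h j hj]
  apply Finset.sum_congr rfl
  intro i _
  apply S.mu_congr
  intro m _
  unfold ext
  split_ifs with hm
  · exact h m (by omega)
  · rfl

theorem ext_self (S : NumerationSystem) (β : ℝ) (x : ℕ → ℕ) (k : ℕ) :
    S.mu β (ext x k (x k)) (k + 1) = S.mu β x (k + 1) := by
  apply S.mu_congr
  intro i hi
  unfold ext
  split_ifs with h
  · rfl
  · rw [show i = k by omega]

theorem P_mu_anti (S : NumerationSystem) (β : ℝ) (hβ : S.IsCharRoot β) (x : ℕ → ℕ) :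
    Antitone (fun k => S.P β x k + S.mu β x k) := by
  apply antitone_nat_of_succ_le
  intro k
  have h : S.P β x (k+1) = S.P β x k + ∑ i ∈ Finset.range (x k), S.mu β (ext x k i) (k + 1) := by
    unfold P; rw [Finset.sum_range_succ]
  rw [h, ← S.ext_self, add_assoc,
    ← Finset.sum_range_succ (fun i => S.mu β (ext x k i) (k + 1)),
    S.mu_add β hβ x k (max (S.G (k+1)) (x k + 1)) (fun n => lt_max_of_lt_left (S.dig_lt_G n k))]
  gcongr
  · intros; exact S.mu_nonneg β hβ _ _
  · exact le_max_right _ _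

theorem P_mono (S : NumerationSystem) (β : ℝ) (hβ : S.IsCharRoot β) (x : ℕ → ℕ) :
    Monotone (S.P β x) := by
  apply monotone_nat_of_le_succ
  intro k
  unfold P
  rw [Finset.sum_range_succ]
  have : 0 ≤ ∑ i ∈ Finset.range (x k), S.mu β (ext x k i) (k + 1) :=
    Finset.sum_nonneg (fun i _ => S.mu_nonneg β hβ _ _)
  linarith

theorem P_tendsto (S : NumerationSystem) (β : ℝ) (hβ : S.IsCharRoot β) (x : ℕ → ℕ) :
    Filter.Tendsto (S.P β x) Filter.atTop (nhds (S.psiSeq β x)) := by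
  have hs : Summable (fun k : ℕ => ∑ i ∈ Finset.range (x k), S.mu β (ext x k i) (k + 1)) := by
    apply summable_of_sum_range_le (c := S.mu β x 0)
    · intro k; exact Finset.sum_nonneg (fun i _ => S.mu_nonneg β hβ _ _)
    · intro n
      have h1 := S.P_mu_anti β hβ x (Nat.zero_le n)
      have h2 := S.mu_nonneg β hβ x n
      simp only at h1
      have h3 : S.P β x 0 = 0 := by simp [P]
      change S.P β x n ≤ _
      linarith
  exact hs.hasSum.tendsto_sum_nat

theorem psi_mem (S : NumerationSystem) (β : ℝ) (hβ : S.IsCharRoot β) (x : ℕ → ℕ) (K : ℕ) :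
    S.psiSeq β x ∈ Set.Icc (S.P β x K) (S.P β x K + S.mu β x K) := by
  have ht := S.P_tendsto β hβ x
  constructor
  · exact (S.P_mono β hβ x).ge_of_tendsto ht K
  · apply le_of_tendsto ht
    filter_upwards [Filter.eventually_ge_atTop K] with k hk
    have h1 := S.P_mu_anti β hβ x hk
    have h2 := S.mu_nonneg β hβ x k
    simp only at h1
    linarith

/-- `t` lies in the half-open interval of the word. -/
def H (S : NumerationSystem) (β t : ℝ) (v : ℕ → ℕ) (k : ℕ) : Prop :=
  S.P β v k ≤ t ∧ t < S.P β v k + S.mu β v k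

theorem find_index (f : ℕ → ℝ) (M : ℕ) (u : ℝ) (h0 : 0 ≤ u) (h : u < ∑ i ∈ Finset.range M, f i) :
    ∃ i, ∑ j ∈ Finset.range i, f j ≤ u ∧ u < ∑ j ∈ Finset.range i, f j + f i := by
  induction M with
  | zero => simp at h; linarith
  | succ M ih =>
    by_cases h' : u < ∑ i ∈ Finset.range M, f i
    · exact ih h'
    · rw [Finset.sum_range_succ] at h
      exact ⟨M, not_lt.1 h', h⟩

theorem H_step (S : NumerationSystem) (β : ℝ) (hβ : S.IsCharRoot β) (t : ℝ) (v : ℕ → ℕ) (k : ℕ)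
    (h : S.H β t v k) : ∃ v', (∀ i, i < k → v' i = v i) ∧ S.H β t v' (k + 1) := by
  obtain ⟨h1, h2⟩ := h
  rw [S.mu_add β hβ v k _ (fun n => S.dig_lt_G n k)] at h2
  obtain ⟨i, hi1, hi2⟩ := find_index (fun i => S.mu β (ext v k i) (k + 1)) _ (t - S.P β v k)
    (by linarith) (by linarith)
  have hagree : ∀ j, j < k → ext v k i j = v j := by
    intro j hj; simp [ext, hj]
  have hk : ext v k i k = i := by simp [ext]
  have hP : S.P β (ext v k i) (k + 1) = S.P β v k +
      ∑ j ∈ Finset.range i, S.mu β (ext v k j) (k + 1) := by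
    rw [← S.P_congr β _ _ k hagree]
    unfold P
    rw [Finset.sum_range_succ, hk]
    congr 1
    apply Finset.sum_congr rfl
    intro j _
    apply S.mu_congr
    intro m _
    by_cases hm : m < k <;> simp [ext, hm]
  refine ⟨ext v k i, hagree, ?_, ?_⟩
  · rw [hP]; linarith
  · rw [hP]; linarith

theorem surj (S : NumerationSystem) (β : ℝ) (hβ : S.IsCharRoot β) (t : ℝ) (w : ℕ → ℕ) (K : ℕ)
    (h : S.H β t w K) :
    ∃ x, S.RegularSeq x ∧ (∀ i, i < K → x i = w i) ∧ S.psiSeq β x = t := by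
  choose f hf1 hf2 using S.H_step β hβ t
  let s : (n : ℕ) → {v : ℕ → ℕ // S.H β t v (K + n)} := fun n =>
    Nat.rec (motive := fun n => {v : ℕ → ℕ // S.H β t v (K + n)}) ⟨w, h⟩
      (fun n v => ⟨f v.1 (K + n) v.2, hf2 v.1 (K + n) v.2⟩) n
  have hs : ∀ n i, i < K + n → (s (n + 1)).1 i = (s n).1 i := fun n i hi =>
    hf1 (s n).1 (K + n) (s n).2 i hi
  have hs' : ∀ n m i, i < K + n → (s (n + m)).1 i = (s n).1 i := by
    intro n m i hi
    induction m with
    | zero => rfl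
    | succ m ih => rw [← ih]; exact hs (n + m) i (by omega)
  let x : ℕ → ℕ := fun m => (s (m + 1)).1 m
  have hx : ∀ n i, i < K + n → x i = (s n).1 i := by
    intro n i hi
    have e1 := hs' n (i + 1) i hi
    have e2 := hs' (i + 1) n i (by omega)
    have e3 : (s (i + 1 + n)).1 i = (s (n + (i + 1))).1 i :=
      congrArg (fun q => (s q).1 i) (add_comm (i + 1) n)
    exact (e2.symm.trans e3).trans e1
  have hH : ∀ n, S.H β t x (K + n) := by
    intro n
    have := (s n).2
    unfold H at this ⊢
    rwa [S.P_congr β x _ _ (hx n), S.mu_congr β x _ _ (hx n)]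
  refine ⟨x, ?_, fun i hi => hx 0 i (by omega), ?_⟩
  · intro n
    have := hH n
    have hpos : 0 < S.mu β x (K + n) := by
      unfold H at this; linarith [this.1, this.2]
    exact S.regular_of_mu_pos β x _ hpos n (by omega)
  · have h1 : ∀ n, |S.psiSeq β x - t| ≤ S.mu β x (n + K) := by
      intro n
      have a := hH n
      have b := S.psi_mem β hβ x (K + n)
      unfold H at a
      rw [add_comm n K, abs_le]
      constructor <;> linarith [a.1, a.2, b.1, b.2]
    have h2 : |S.psiSeq β x - t| ≤ 0 :=
      ge_of_tendsto' ((Filter.tendsto_add_atTop_iff_nat K).2 (S.mu_tendsto β hβ x)) h1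
    have := abs_eq_zero.1 (le_antisymm h2 (abs_nonneg _))
    linarith

end NumerationSystem

/-- The extended `β`-adic Monna map transports the cylinder measure `μ`
to Lebesgue measure: `μ(Z) = λ(ψ_β(𝒦_Z))` for every cylinder set `Z`. -/
theorem mu_eq_volume_psi_image_cylinder
    (S : NumerationSystem) (β : ℝ) (hβ : S.IsCharRoot β)
    (w : ℕ → ℕ) (K : ℕ) (hw : S.RegularWord w K) :
    S.mu β w K =
      (MeasureTheory.volume
        (S.psiSeq β '' {x : ℕ → ℕ | S.RegularSeq x ∧ ∀ i, i < K → x i = w i})).toReal := by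
  set A := S.psiSeq β '' {x : ℕ → ℕ | S.RegularSeq x ∧ ∀ i, i < K → x i = w i} with hA
  have h1 : A ⊆ Set.Icc (S.P β w K) (S.P β w K + S.mu β w K) := by
    rintro _ ⟨x, ⟨_, hx⟩, rfl⟩
    rw [← S.P_congr β x w K hx, ← S.mu_congr β x w K hx]
    exact S.psi_mem β hβ x K
  have h2 : Set.Ico (S.P β w K) (S.P β w K + S.mu β w K) ⊆ A := by
    intro t ht
    obtain ⟨x, hr, hx, rfl⟩ := S.surj β hβ t w K ht
    exact ⟨x, ⟨hr, hx⟩, rfl⟩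
  have h3 : MeasureTheory.volume A = ENNReal.ofReal (S.mu β w K) := by
    apply le_antisymm
    · refine (MeasureTheory.measure_mono h1).trans ?_
      rw [Real.volume_Icc, add_sub_cancel_left]
    · refine le_trans ?_ (MeasureTheory.measure_mono h2)
      rw [Real.volume_Ico, add_sub_cancel_left]
  rw [h3, ENNReal.toReal_ofReal (S.mu_nonneg β hβ w K)]
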